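/- arXiv:2003.04425 — 2 statements merged into one kernel-verified Lean document; each statement's English description precedes it below -/
import Mathlib

section
/- Assume V is bounded, let σ > 0, and let g : ℝ → ℝ be a nondecreasing Borel function with values in (m, M). Then φ⁺_g and φ⁻_g are nondecreasing functions on ℝ, and for every x ∈ ℝ one has φ⁺_g(x) ≤ ∫_ℝ Ψ⁺(g(z)) q(σ, x−z) dz and φ⁻_g(x) ≥ ∫_ℝ Ψ⁻(g(z)) q(σ, x−z) dz, where Ψ⁺ = Φ⁺/Π⁺ and Ψ⁻ = Φ⁻/Π⁻. -/
open MeasureTheory Filter Set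

/-- Centered Gaussian density with variance `σ²`. -/
noncomputable def gq (σ z : ℝ) : ℝ :=
  Real.exp (-(z ^ 2) / (2 * σ ^ 2)) / (σ * Real.sqrt (2 * Real.pi))

/-- The averaged kernel `q̄(σ,x,z)`. -/
noncomputable def gqbar (σ x z : ℝ) : ℝ :=
  if x = 0 then gq σ z else (1 / x) * ∫ y in (0:ℝ)..x, gq σ (y - z)

/-- `Φ⁺(y) = E[V·1_{V>y}]`. -/
noncomputable def Phip {Ω : Type*} [MeasurableSpace Ω] (P : Measure Ω) (V : Ω → ℝ) (y : ℝ) : ℝ :=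
  ∫ ω in {ω | V ω > y}, V ω ∂P

/-- `Π⁺(y) = P(V > y)`. -/
noncomputable def Pip {Ω : Type*} [MeasurableSpace Ω] (P : Measure Ω) (V : Ω → ℝ) (y : ℝ) : ℝ :=
  (P {ω | V ω > y}).toReal

/-- `Φ⁻(y) = E[V·1_{V≤y}]`. -/
noncomputable def Phim {Ω : Type*} [MeasurableSpace Ω] (P : Measure Ω) (V : Ω → ℝ) (y : ℝ) : ℝ :=
  ∫ ω in {ω | V ω ≤ y}, V ω ∂P

/-- `Π⁻(y) = P(V ≤ y)`. -/
noncomputable def Pim {Ω : Type*} [MeasurableSpace Ω] (P : Measure Ω) (V : Ω → ℝ) (y : ℝ) : ℝ :=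
  (P {ω | V ω ≤ y}).toReal

/-- `Ψ⁺ = Φ⁺/Π⁺`. -/
noncomputable def Psip {Ω : Type*} [MeasurableSpace Ω] (P : Measure Ω) (V : Ω → ℝ) (y : ℝ) : ℝ :=
  Phip P V y / Pip P V y

/-- `Ψ⁻ = Φ⁻/Π⁻`. -/
noncomputable def Psim {Ω : Type*} [MeasurableSpace Ω] (P : Measure Ω) (V : Ω → ℝ) (y : ℝ) : ℝ :=
  Phim P V y / Pim P V y

/-- `φ⁺_g`. -/
noncomputable def phip {Ω : Type*} [MeasurableSpace Ω] (P : Measure Ω) (V : Ω → ℝ)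
    (σ : ℝ) (g : ℝ → ℝ) (x : ℝ) : ℝ :=
  (∫ z, Phip P V (g z) * gq σ (x - z)) / (∫ z, Pip P V (g z) * gq σ (x - z))

/-- `φ⁻_g`. -/
noncomputable def phim {Ω : Type*} [MeasurableSpace Ω] (P : Measure Ω) (V : Ω → ℝ)
    (σ : ℝ) (g : ℝ → ℝ) (x : ℝ) : ℝ :=
  (∫ z, Phim P V (g z) * gq σ (x - z)) / (∫ z, Pim P V (g z) * gq σ (x - z))

/-- `φ_g`, equal to `φ⁺_g` on `[0,∞)` and `φ⁻_g` on `(−∞,0)`. -/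
noncomputable def phig {Ω : Type*} [MeasurableSpace Ω] (P : Measure Ω) (V : Ω → ℝ)
    (σ : ℝ) (g : ℝ → ℝ) (x : ℝ) : ℝ :=
  if 0 ≤ x then phip P V σ g x else phim P V σ g x

/-- The interior of the support of the law of `V` is `(m, M)` (with `V` bounded). -/
def SuppIoo {Ω : Type*} [MeasurableSpace Ω] (P : Measure Ω) (V : Ω → ℝ) (m M : ℝ) : Prop :=
  m < M ∧ (∀ᵐ ω ∂P, V ω ∈ Set.Icc m M) ∧
    (∀ y < M, 0 < P {ω | V ω > y}) ∧ (∀ y, m < y → 0 < P {ω | V ω ≤ y})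

/-- Equation (E). -/
def SolvesE {Ω : Type*} [MeasurableSpace Ω] (P : Measure Ω) (V : Ω → ℝ)
    (σ : ℝ) (N : ℕ) (F : ℝ → ℝ) : Prop :=
  ∀ x : ℝ, F x =
    ∫ z, ((1 / (N:ℝ)) * gq σ (x - z) + (((N:ℝ) - 1) / (N:ℝ)) * gqbar σ x z) * phig P V σ F z

/-!
All four claims are instances of one principle: the mean of a nondecreasing function increases when
its weight increases in the likelihood ratio order. Indeed `Ψ⁺(y)` and `Ψ⁻(y)` are the means of the
identity for the law of `V` weighted by the indicators of `(y, ∞)` and `(-∞, y]`, which increase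
with `y`, so `Ψ⁺` and `Ψ⁻` are nondecreasing. Since `Φ = Ψ · Π`, the number `φ_g(x)` is the mean of
`Ψ ∘ g` for the weight `z ↦ Π(g(z)) q(σ, x - z)`, which increases with `x`; and the weight
`q(σ, x - ·)` dominates its product with the nonincreasing `Π⁺ ∘ g` and is dominated by its product
with the nondecreasing `Π⁻ ∘ g`.
-/

section LikelihoodRatio

variable {α : Type*}

/-- The likelihood ratio order, which compares weighted means of nondecreasing functions: `l / k` is
nondecreasing, stated without division so that the weights may vanish. -/
def LikelihoodRatioLE [Preorder α] (k l : α → ℝ) : Prop :=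
  ∀ ⦃z w⦄, z ≤ w → l z * k w ≤ k z * l w

/-- The mean of `f` with respect to the unnormalized density `k` against `μ`, the common form of
`Ψ⁺`, `Ψ⁻`, `φ⁺_g` and `φ⁻_g`. It is `0` when the total weight vanishes. -/
noncomputable def weightedMean [MeasurableSpace α] (μ : Measure α) (k f : α → ℝ) : ℝ :=
  (∫ z, f z * k z ∂μ) / ∫ z, k z ∂μ

theorem LikelihoodRatioLE.mul_left [Preorder α] {b k l : α → ℝ} (h : LikelihoodRatioLE k l)
    (hb : ∀ z, 0 ≤ b z) : LikelihoodRatioLE (fun z => b z * k z) (fun z => b z * l z) := by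
  intro z w hzw
  calc b z * l z * (b w * k w) = b z * b w * (l z * k w) := by ring
    _ ≤ b z * b w * (k z * l w) :=
        mul_le_mul_of_nonneg_left (h hzw) (mul_nonneg (hb z) (hb w))
    _ = b z * k z * (b w * l w) := by ring

theorem likelihoodRatioLE_mul_of_monotone [Preorder α] {b k : α → ℝ} (hb : Monotone b)
    (hk : ∀ z, 0 ≤ k z) : LikelihoodRatioLE k (fun z => b z * k z) := by
  intro z w hzw
  calc b z * k z * k w ≤ b w * k z * k w := by
        gcongr
        exacts [hk w, hk z, hb hzw]
    _ = k z * (b w * k w) := by ring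

theorem likelihoodRatioLE_mul_of_antitone [Preorder α] {b k : α → ℝ} (hb : Antitone b)
    (hk : ∀ z, 0 ≤ k z) : LikelihoodRatioLE (fun z => b z * k z) k := by
  intro z w hzw
  calc k z * (b w * k w) = b w * k z * k w := by ring
    _ ≤ b z * k z * k w := by
        gcongr
        exacts [hk w, hk z, hb hzw]

theorem likelihoodRatioLE_indicator [Preorder α] {s t : Set α}
    (h : ∀ ⦃z w⦄, z ≤ w → z ∈ t → w ∈ s → z ∈ s ∧ w ∈ t) :
    LikelihoodRatioLE (s.indicator 1) (t.indicator 1) := by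
  intro z w hzw
  by_cases hmem : z ∈ t ∧ w ∈ s
  · obtain ⟨hzt, hws⟩ := hmem
    obtain ⟨hzs, hwt⟩ := h hzw hzt hws
    simp [hzt, hws, hzs, hwt]
  · have hzero : t.indicator (1 : α → ℝ) z * s.indicator 1 w = 0 := by
      rcases not_and_or.1 hmem with hzt | hws
      · simp [hzt]
      · simp [hws]
    rw [hzero]
    exact mul_nonneg (indicator_nonneg (fun _ _ => zero_le_one) z)
      (indicator_nonneg (fun _ _ => zero_le_one) w)

theorem likelihoodRatioLE_indicator_Ioi [Preorder α] {a b : α} (hab : a ≤ b) :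
    LikelihoodRatioLE ((Ioi a).indicator 1) ((Ioi b).indicator 1) :=
  likelihoodRatioLE_indicator fun _ _ hzw hz _ => ⟨hab.trans_lt hz, lt_of_lt_of_le hz hzw⟩

theorem likelihoodRatioLE_indicator_Iic [Preorder α] {a b : α} (hab : a ≤ b) :
    LikelihoodRatioLE ((Iic a).indicator 1) ((Iic b).indicator 1) :=
  likelihoodRatioLE_indicator fun _ _ hzw _ hw => ⟨hzw.trans hw, le_trans hw hab⟩

variable [MeasurableSpace α] {μ : Measure α}

theorem integral_mul_integral_le_of_symm [SFinite μ] {a b c d : α → ℝ}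
    (ha : Integrable a μ) (hb : Integrable b μ) (hc : Integrable c μ) (hd : Integrable d μ)
    (h : ∀ z w, a z * b w + b z * a w ≤ c z * d w + d z * c w) :
    (∫ z, a z ∂μ) * ∫ z, b z ∂μ ≤ (∫ z, c z ∂μ) * ∫ z, d z ∂μ := by
  have two_mul_eq {u v : α → ℝ} (hu : Integrable u μ) (hv : Integrable v μ) :
      ∫ p : α × α, (u p.1 * v p.2 + v p.1 * u p.2) ∂μ.prod μ
        = 2 * ((∫ z, u z ∂μ) * ∫ z, v z ∂μ) := by
    rw [integral_add (hu.mul_prod hv) (hv.mul_prod hu), integral_prod_mul, integral_prod_mul]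
    ring
  have hle := integral_mono ((ha.mul_prod hb).add (hb.mul_prod ha))
    ((hc.mul_prod hd).add (hd.mul_prod hc)) fun p => h p.1 p.2
  simp only [Pi.add_apply, two_mul_eq ha hb, two_mul_eq hc hd] at hle
  linarith

variable [LinearOrder α] {f k l : α → ℝ}

theorem LikelihoodRatioLE.integral_mul_integral_le [SFinite μ] (h : LikelihoodRatioLE k l)
    (hf : Monotone f) (hk : Integrable k μ) (hl : Integrable l μ)
    (hfk : Integrable (fun z => f z * k z) μ) (hfl : Integrable (fun z => f z * l z) μ) :
    (∫ z, f z * k z ∂μ) * ∫ z, l z ∂μ ≤ (∫ z, f z * l z ∂μ) * ∫ z, k z ∂μ := by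
  refine integral_mul_integral_le_of_symm hfk hl hfl hk fun z w => ?_
  have hprod : 0 ≤ (f w - f z) * (k z * l w - l z * k w) := by
    rcases le_total z w with hzw | hwz
    · exact mul_nonneg (sub_nonneg.2 (hf hzw)) (sub_nonneg.2 (h hzw))
    · refine mul_nonneg_of_nonpos_of_nonpos (sub_nonpos.2 (hf hwz)) ?_
      linarith [h hwz]
  linarith

theorem LikelihoodRatioLE.weightedMean_le [SFinite μ] (h : LikelihoodRatioLE k l)
    (hf : Monotone f) (hk : Integrable k μ) (hl : Integrable l μ)
    (hfk : Integrable (fun z => f z * k z) μ) (hfl : Integrable (fun z => f z * l z) μ)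
    (hk_pos : 0 < ∫ z, k z ∂μ) (hl_pos : 0 < ∫ z, l z ∂μ) :
    weightedMean μ k f ≤ weightedMean μ l f :=
  (div_le_div_iff₀ hk_pos hl_pos).2 (h.integral_mul_integral_le hf hk hl hfk hfl)

end LikelihoodRatio

theorem integral_pos_of_forall_pos {α : Type*} [MeasurableSpace α] {μ : Measure α} [NeZero μ]
    {f : α → ℝ} (hf : Integrable f μ) (hpos : ∀ z, 0 < f z) : 0 < ∫ z, f z ∂μ := by
  have hsupport : Function.support f = univ := eq_univ_of_forall fun z => (hpos z).ne'
  rw [integral_pos_iff_support_of_nonneg (fun z => (hpos z).le) hf, hsupport]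
  exact NeZero.pos _

section ConditionalMean

variable {Ω : Type*} [MeasurableSpace Ω] {P : Measure Ω} {V : Ω → ℝ} {y y₁ y₂ : ℝ}

theorem setAverage_preimage_eq_weightedMean (hV : AEMeasurable V P) {s : Set ℝ}
    (hs : MeasurableSet s) :
    ⨍ ω in V ⁻¹' s, V ω ∂P = weightedMean (P.map V) (s.indicator 1) id := by
  have hmul (v : ℝ) : id v * s.indicator 1 v = s.indicator id v := by
    by_cases hv : v ∈ s <;> simp [hv]
  simp only [weightedMean, hmul]
  rw [integral_indicator_one hs, integral_indicator hs,
    setIntegral_map hs aestronglyMeasurable_id hV, map_measureReal_apply_of_aemeasurable hV hs,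
    setAverage_eq, smul_eq_mul, ← div_eq_inv_mul]
  rfl

theorem setAverage_preimage_le_setAverage_preimage [IsFiniteMeasure P] (hV : Integrable V P)
    {s t : Set ℝ} (hs : MeasurableSet s) (ht : MeasurableSet t)
    (hst : LikelihoodRatioLE (s.indicator 1) (t.indicator 1))
    (hPs : 0 < P.real (V ⁻¹' s)) (hPt : 0 < P.real (V ⁻¹' t)) :
    ⨍ ω in V ⁻¹' s, V ω ∂P ≤ ⨍ ω in V ⁻¹' t, V ω ∂P := by
  have hVm : AEMeasurable V P := hV.aemeasurable
  have hid : Integrable id (P.map V) := (integrable_map_measure aestronglyMeasurable_id hVm).2 hV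
  have hone {u : Set ℝ} (hu : MeasurableSet u) :
      Integrable (u.indicator (1 : ℝ → ℝ)) (P.map V) :=
    (integrable_const (1 : ℝ)).indicator hu
  have hid_mul {u : Set ℝ} (hu : MeasurableSet u) :
      Integrable (fun v => id v * u.indicator (1 : ℝ → ℝ) v) (P.map V) := by
    refine (hid.indicator hu).congr (.of_forall fun v => ?_)
    by_cases hv : v ∈ u <;> simp [hv]
  have hpos {u : Set ℝ} (hu : MeasurableSet u) (hPu : 0 < P.real (V ⁻¹' u)) :
      0 < ∫ v, u.indicator (1 : ℝ → ℝ) v ∂P.map V := by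
    rwa [integral_indicator_one hu, map_measureReal_apply_of_aemeasurable hVm hu]
  rw [setAverage_preimage_eq_weightedMean hVm hs, setAverage_preimage_eq_weightedMean hVm ht]
  exact hst.weightedMean_le monotone_id (hone hs) (hone ht) (hid_mul hs) (hid_mul ht)
    (hpos hs hPs) (hpos ht hPt)

theorem abs_setIntegral_le_integral_abs (hV : Integrable V P) (s : Set Ω) :
    |∫ ω in s, V ω ∂P| ≤ ∫ ω, |V ω| ∂P :=
  abs_integral_le_integral_abs.trans
    (setIntegral_le_integral hV.abs (.of_forall fun ω => abs_nonneg (V ω)))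

theorem Psip_eq_setAverage (P : Measure Ω) (V : Ω → ℝ) (y : ℝ) :
    Psip P V y = ⨍ ω in V ⁻¹' Ioi y, V ω ∂P := by
  rw [setAverage_eq, smul_eq_mul, ← div_eq_inv_mul]
  rfl

theorem Psim_eq_setAverage (P : Measure Ω) (V : Ω → ℝ) (y : ℝ) :
    Psim P V y = ⨍ ω in V ⁻¹' Iic y, V ω ∂P := by
  rw [setAverage_eq, smul_eq_mul, ← div_eq_inv_mul]
  rfl

theorem Psip_mul_Pip (h : 0 < Pip P V y) : Psip P V y * Pip P V y = Phip P V y :=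
  div_mul_cancel₀ _ h.ne'

theorem Psim_mul_Pim (h : 0 < Pim P V y) : Psim P V y * Pim P V y = Phim P V y :=
  div_mul_cancel₀ _ h.ne'

theorem Psip_mem_Icc (hV : Integrable V P) {m M : ℝ} (hVmM : ∀ᵐ ω ∂P, V ω ∈ Icc m M)
    (h : 0 < Pip P V y) : Psip P V y ∈ Icc m M := by
  obtain ⟨hne, htop⟩ := ENNReal.toReal_pos_iff.1 h
  rw [Psip_eq_setAverage]
  exact (convex_Icc m M).set_average_mem isClosed_Icc hne.ne' htop.ne (ae_restrict_of_ae hVmM)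
    hV.integrableOn

theorem Psim_mem_Icc (hV : Integrable V P) {m M : ℝ} (hVmM : ∀ᵐ ω ∂P, V ω ∈ Icc m M)
    (h : 0 < Pim P V y) : Psim P V y ∈ Icc m M := by
  obtain ⟨hne, htop⟩ := ENNReal.toReal_pos_iff.1 h
  rw [Psim_eq_setAverage]
  exact (convex_Icc m M).set_average_mem isClosed_Icc hne.ne' htop.ne (ae_restrict_of_ae hVmM)
    hV.integrableOn

variable [IsFiniteMeasure P]

theorem SuppIoo.Pip_pos {m M : ℝ} (h : SuppIoo P V m M) (hy : y < M) : 0 < Pip P V y :=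
  ENNReal.toReal_pos (h.2.2.1 y hy).ne' (measure_ne_top P _)

theorem SuppIoo.Pim_pos {m M : ℝ} (h : SuppIoo P V m M) (hy : m < y) : 0 < Pim P V y :=
  ENNReal.toReal_pos (h.2.2.2 y hy).ne' (measure_ne_top P _)

theorem antitone_Pip : Antitone (Pip P V) := fun _ _ h =>
  measureReal_mono (μ := P) (preimage_mono (f := V) (Ioi_subset_Ioi h))

theorem monotone_Pim : Monotone (Pim P V) := fun _ _ h =>
  measureReal_mono (μ := P) (preimage_mono (f := V) (Iic_subset_Iic.2 h))

theorem Psip_le_Psip (hV : Integrable V P) (h : y₁ ≤ y₂) (hpos : 0 < Pip P V y₂) :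
    Psip P V y₁ ≤ Psip P V y₂ := by
  rw [Psip_eq_setAverage, Psip_eq_setAverage]
  exact setAverage_preimage_le_setAverage_preimage hV measurableSet_Ioi measurableSet_Ioi
    (likelihoodRatioLE_indicator_Ioi h) (hpos.trans_le (antitone_Pip h)) hpos

theorem Psim_le_Psim (hV : Integrable V P) (h : y₁ ≤ y₂) (hpos : 0 < Pim P V y₁) :
    Psim P V y₁ ≤ Psim P V y₂ := by
  rw [Psim_eq_setAverage, Psim_eq_setAverage]
  exact setAverage_preimage_le_setAverage_preimage hV measurableSet_Iic measurableSet_Iic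
    (likelihoodRatioLE_indicator_Iic h) hpos (hpos.trans_le (monotone_Pim h))

end ConditionalMean

section GaussianWeight

variable {σ : ℝ}

theorem gq_sub_eq_gaussianPDFReal (hσ : 0 < σ) (x z : ℝ) :
    gq σ (x - z) = ProbabilityTheory.gaussianPDFReal x (σ ^ 2).toNNReal z := by
  have hsqrt : √(2 * Real.pi * σ ^ 2) = σ * √(2 * Real.pi) := by
    rw [Real.sqrt_mul (by positivity), Real.sqrt_sq hσ.le, mul_comm]
  rw [gq, ProbabilityTheory.gaussianPDFReal, Real.coe_toNNReal _ (sq_nonneg σ), hsqrt,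
    sub_sq_comm x z, div_eq_inv_mul]

theorem gq_pos (hσ : 0 < σ) (z : ℝ) : 0 < gq σ z := by
  unfold gq
  positivity

theorem integrable_gq_sub (hσ : 0 < σ) (x : ℝ) : Integrable fun z => gq σ (x - z) := by
  simp only [gq_sub_eq_gaussianPDFReal hσ]
  exact ProbabilityTheory.integrable_gaussianPDFReal _ _

theorem integral_gq_sub (hσ : 0 < σ) (x : ℝ) : ∫ z, gq σ (x - z) = 1 := by
  simp only [gq_sub_eq_gaussianPDFReal hσ]
  exact ProbabilityTheory.integral_gaussianPDFReal_eq_one _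
    (Real.toNNReal_pos.2 (by positivity)).ne'

theorem integrable_mul_gq_sub (hσ : 0 < σ) {f : ℝ → ℝ} (hf : AEStronglyMeasurable f) {C : ℝ}
    (hC : ∀ z, |f z| ≤ C) (x : ℝ) : Integrable fun z => f z * gq σ (x - z) :=
  (integrable_gq_sub hσ x).bdd_mul hf (.of_forall hC)

theorem likelihoodRatioLE_gq_sub (σ : ℝ) {x y : ℝ} (hxy : x ≤ y) :
    LikelihoodRatioLE (fun z => gq σ (x - z)) (fun z => gq σ (y - z)) := by
  intro z w hzw
  -- The exponents on the two sides differ by `(y - x) * (w - z) / σ ^ 2`.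
  have hsq : -(y - z) ^ 2 + -(x - w) ^ 2 ≤ -(x - z) ^ 2 + -(y - w) ^ 2 := by
    linarith [mul_nonneg (sub_nonneg.2 hxy) (sub_nonneg.2 hzw)]
  simp only [gq, div_mul_div_comm, ← Real.exp_add, ← add_div]
  gcongr
  exact mul_self_nonneg _

variable {f b : ℝ → ℝ}

theorem integrable_mul_mul_gq_sub (hσ : 0 < σ) (hf : Measurable f) (hb : Measurable b) {C : ℝ}
    (hC : ∀ z, |f z * b z| ≤ C) (x : ℝ) : Integrable fun z => f z * (b z * gq σ (x - z)) := by
  simpa only [Pi.mul_apply, mul_assoc] using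
    integrable_mul_gq_sub hσ (hf.mul hb).aestronglyMeasurable hC x

theorem monotone_weightedMean_mul_gq_sub (hσ : 0 < σ) (hf : Monotone f) (hb : ∀ z, 0 < b z)
    (hbq : ∀ x, Integrable fun z => b z * gq σ (x - z))
    (hfbq : ∀ x, Integrable fun z => f z * (b z * gq σ (x - z))) :
    Monotone fun x => weightedMean volume (fun z => b z * gq σ (x - z)) f := by
  intro x y hxy
  have hpos (x : ℝ) : 0 < ∫ z, b z * gq σ (x - z) :=
    integral_pos_of_forall_pos (hbq x) fun z => mul_pos (hb z) (gq_pos hσ _)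
  exact ((likelihoodRatioLE_gq_sub σ hxy).mul_left fun z => (hb z).le).weightedMean_le hf
    (hbq x) (hbq y) (hfbq x) (hfbq y) (hpos x) (hpos y)

theorem weightedMean_gq_sub (hσ : 0 < σ) (f : ℝ → ℝ) (x : ℝ) :
    weightedMean volume (fun z => gq σ (x - z)) f = ∫ z, f z * gq σ (x - z) := by
  rw [weightedMean, integral_gq_sub hσ, div_one]

variable {x : ℝ}

theorem weightedMean_mul_gq_sub_le_integral (hσ : 0 < σ) (hf : Monotone f) (hb : ∀ z, 0 < b z)
    (hb_anti : Antitone b) (hbq : Integrable fun z => b z * gq σ (x - z))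
    (hfbq : Integrable fun z => f z * (b z * gq σ (x - z)))
    (hfq : Integrable fun z => f z * gq σ (x - z)) :
    weightedMean volume (fun z => b z * gq σ (x - z)) f ≤ ∫ z, f z * gq σ (x - z) := by
  rw [← weightedMean_gq_sub hσ]
  have hq := integrable_gq_sub hσ x
  exact (likelihoodRatioLE_mul_of_antitone hb_anti fun z => (gq_pos hσ _).le).weightedMean_le hf
    hbq hq hfbq hfq (integral_pos_of_forall_pos hbq fun z => mul_pos (hb z) (gq_pos hσ _))
    (integral_pos_of_forall_pos hq fun z => gq_pos hσ _)

theorem integral_le_weightedMean_mul_gq_sub (hσ : 0 < σ) (hf : Monotone f) (hb : ∀ z, 0 < b z)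
    (hb_mono : Monotone b) (hbq : Integrable fun z => b z * gq σ (x - z))
    (hfbq : Integrable fun z => f z * (b z * gq σ (x - z)))
    (hfq : Integrable fun z => f z * gq σ (x - z)) :
    ∫ z, f z * gq σ (x - z) ≤ weightedMean volume (fun z => b z * gq σ (x - z)) f := by
  rw [← weightedMean_gq_sub hσ]
  have hq := integrable_gq_sub hσ x
  exact (likelihoodRatioLE_mul_of_monotone hb_mono fun z => (gq_pos hσ _).le).weightedMean_le hf
    hq hbq hfq hfbq (integral_pos_of_forall_pos hq fun z => gq_pos hσ _)
    (integral_pos_of_forall_pos hbq fun z => mul_pos (hb z) (gq_pos hσ _))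

end GaussianWeight

section SmoothedMean

variable {Ω : Type*} [MeasurableSpace Ω] {P : Measure Ω} {V : Ω → ℝ} {σ : ℝ} {g : ℝ → ℝ}

theorem phip_eq_weightedMean (hpos : ∀ z, 0 < Pip P V (g z)) (x : ℝ) :
    phip P V σ g x =
      weightedMean volume (fun z => Pip P V (g z) * gq σ (x - z)) fun z => Psip P V (g z) := by
  simp only [phip, weightedMean, ← mul_assoc, Psip_mul_Pip (hpos _)]

theorem phim_eq_weightedMean (hpos : ∀ z, 0 < Pim P V (g z)) (x : ℝ) :
    phim P V σ g x =
      weightedMean volume (fun z => Pim P V (g z) * gq σ (x - z)) fun z => Psim P V (g z) := by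
  simp only [phim, weightedMean, ← mul_assoc, Psim_mul_Pim (hpos _)]

variable [IsFiniteMeasure P]

theorem monotone_Psip_comp (hV : Integrable V P) (hg : Monotone g)
    (hpos : ∀ z, 0 < Pip P V (g z)) : Monotone fun z => Psip P V (g z) := fun _ w h =>
  Psip_le_Psip hV (hg h) (hpos w)

theorem monotone_Psim_comp (hV : Integrable V P) (hg : Monotone g)
    (hpos : ∀ z, 0 < Pim P V (g z)) : Monotone fun z => Psim P V (g z) := fun z _ h =>
  Psim_le_Psim hV (hg h) (hpos z)

theorem integrable_Pip_mul_gq_sub (hσ : 0 < σ) (hg : Monotone g) (x : ℝ) :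
    Integrable fun z => Pip P V (g z) * gq σ (x - z) :=
  integrable_mul_gq_sub hσ (antitone_Pip.comp_monotone hg).measurable.aestronglyMeasurable
    (C := P.real univ) (fun z => (abs_of_nonneg measureReal_nonneg).trans_le
      (measureReal_mono (subset_univ {ω | V ω > g z}))) x

theorem integrable_Pim_mul_gq_sub (hσ : 0 < σ) (hg : Monotone g) (x : ℝ) :
    Integrable fun z => Pim P V (g z) * gq σ (x - z) :=
  integrable_mul_gq_sub hσ (monotone_Pim.comp hg).measurable.aestronglyMeasurable
    (C := P.real univ) (fun z => (abs_of_nonneg measureReal_nonneg).trans_le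
      (measureReal_mono (subset_univ {ω | V ω ≤ g z}))) x

theorem integrable_Psip_mul_Pip_mul_gq_sub (hV : Integrable V P) (hσ : 0 < σ) (hg : Monotone g)
    (hpos : ∀ z, 0 < Pip P V (g z)) (x : ℝ) :
    Integrable fun z => Psip P V (g z) * (Pip P V (g z) * gq σ (x - z)) :=
  integrable_mul_mul_gq_sub hσ (monotone_Psip_comp hV hg hpos).measurable
    (antitone_Pip.comp_monotone hg).measurable
    (fun z => (congrArg abs (Psip_mul_Pip (hpos z))).trans_le
      (abs_setIntegral_le_integral_abs hV _)) x

theorem integrable_Psim_mul_Pim_mul_gq_sub (hV : Integrable V P) (hσ : 0 < σ) (hg : Monotone g)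
    (hpos : ∀ z, 0 < Pim P V (g z)) (x : ℝ) :
    Integrable fun z => Psim P V (g z) * (Pim P V (g z) * gq σ (x - z)) :=
  integrable_mul_mul_gq_sub hσ (monotone_Psim_comp hV hg hpos).measurable
    (monotone_Pim.comp hg).measurable
    (fun z => (congrArg abs (Psim_mul_Pim (hpos z))).trans_le
      (abs_setIntegral_le_integral_abs hV _)) x

theorem integrable_Psip_mul_gq_sub (hV : Integrable V P) {m M : ℝ}
    (hVmM : ∀ᵐ ω ∂P, V ω ∈ Icc m M) (hσ : 0 < σ) (hg : Monotone g)
    (hpos : ∀ z, 0 < Pip P V (g z)) (x : ℝ) :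
    Integrable fun z => Psip P V (g z) * gq σ (x - z) :=
  integrable_mul_gq_sub hσ (monotone_Psip_comp hV hg hpos).measurable.aestronglyMeasurable
    (fun z => abs_le_max_abs_abs (Psip_mem_Icc hV hVmM (hpos z)).1
      (Psip_mem_Icc hV hVmM (hpos z)).2) x

theorem integrable_Psim_mul_gq_sub (hV : Integrable V P) {m M : ℝ}
    (hVmM : ∀ᵐ ω ∂P, V ω ∈ Icc m M) (hσ : 0 < σ) (hg : Monotone g)
    (hpos : ∀ z, 0 < Pim P V (g z)) (x : ℝ) :
    Integrable fun z => Psim P V (g z) * gq σ (x - z) :=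
  integrable_mul_gq_sub hσ (monotone_Psim_comp hV hg hpos).measurable.aestronglyMeasurable
    (fun z => abs_le_max_abs_abs (Psim_mem_Icc hV hVmM (hpos z)).1
      (Psim_mem_Icc hV hVmM (hpos z)).2) x

theorem monotone_phip (hV : Integrable V P) (hσ : 0 < σ) (hg : Monotone g)
    (hpos : ∀ z, 0 < Pip P V (g z)) : Monotone (phip P V σ g) := by
  rw [funext (phip_eq_weightedMean hpos)]
  exact monotone_weightedMean_mul_gq_sub hσ (monotone_Psip_comp hV hg hpos) hpos
    (integrable_Pip_mul_gq_sub hσ hg) (integrable_Psip_mul_Pip_mul_gq_sub hV hσ hg hpos)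

theorem monotone_phim (hV : Integrable V P) (hσ : 0 < σ) (hg : Monotone g)
    (hpos : ∀ z, 0 < Pim P V (g z)) : Monotone (phim P V σ g) := by
  rw [funext (phim_eq_weightedMean hpos)]
  exact monotone_weightedMean_mul_gq_sub hσ (monotone_Psim_comp hV hg hpos) hpos
    (integrable_Pim_mul_gq_sub hσ hg) (integrable_Psim_mul_Pim_mul_gq_sub hV hσ hg hpos)

theorem phip_le_integral_Psip (hV : Integrable V P) (hσ : 0 < σ) (hg : Monotone g)
    (hpos : ∀ z, 0 < Pip P V (g z)) {x : ℝ}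
    (hint : Integrable fun z => Psip P V (g z) * gq σ (x - z)) :
    phip P V σ g x ≤ ∫ z, Psip P V (g z) * gq σ (x - z) := by
  rw [phip_eq_weightedMean hpos]
  exact weightedMean_mul_gq_sub_le_integral hσ (monotone_Psip_comp hV hg hpos) hpos
    (antitone_Pip.comp_monotone hg) (integrable_Pip_mul_gq_sub hσ hg x)
    (integrable_Psip_mul_Pip_mul_gq_sub hV hσ hg hpos x) hint

theorem integral_Psim_le_phim (hV : Integrable V P) (hσ : 0 < σ) (hg : Monotone g)
    (hpos : ∀ z, 0 < Pim P V (g z)) {x : ℝ}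
    (hint : Integrable fun z => Psim P V (g z) * gq σ (x - z)) :
    ∫ z, Psim P V (g z) * gq σ (x - z) ≤ phim P V σ g x := by
  rw [phim_eq_weightedMean hpos]
  exact integral_le_weightedMean_mul_gq_sub hσ (monotone_Psim_comp hV hg hpos) hpos
    (monotone_Pim.comp hg) (integrable_Pim_mul_gq_sub hσ hg x)
    (integrable_Psim_mul_Pim_mul_gq_sub hV hσ hg hpos x) hint

end SmoothedMean

theorem stmt2_general {Ω : Type*} [MeasurableSpace Ω] (P : Measure Ω) [IsFiniteMeasure P]
    (V : Ω → ℝ) (hV : Integrable V P) (σ : ℝ) (hσ : 0 < σ) (g : ℝ → ℝ) (hgmono : Monotone g)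
    (hp : ∀ z, 0 < Pip P V (g z)) (hm : ∀ z, 0 < Pim P V (g z)) :
    Monotone (phip P V σ g) ∧ Monotone (phim P V σ g) ∧
    (∀ x : ℝ, Integrable (fun z => Psip P V (g z) * gq σ (x - z)) →
      phip P V σ g x ≤ ∫ z, Psip P V (g z) * gq σ (x - z)) ∧
    (∀ x : ℝ, Integrable (fun z => Psim P V (g z) * gq σ (x - z)) →
      phim P V σ g x ≥ ∫ z, Psim P V (g z) * gq σ (x - z)) :=
  ⟨monotone_phip hV hσ hgmono hp, monotone_phim hV hσ hgmono hm,
    fun _ => phip_le_integral_Psip hV hσ hgmono hp,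
    fun _ => integral_Psim_le_phim hV hσ hgmono hm⟩

/-- If `V` is bounded, `σ > 0` and `g` is a nondecreasing Borel function with values
in `(m, M)`, then `φ⁺_g` and `φ⁻_g` are nondecreasing and, for every `x`,
`φ⁺_g(x) ≤ ∫ Ψ⁺(g(z)) q(σ, x−z) dz` and `φ⁻_g(x) ≥ ∫ Ψ⁻(g(z)) q(σ, x−z) dz`. -/
theorem stmt2 {Ω : Type*} [MeasurableSpace Ω] (P : Measure Ω) [IsProbabilityMeasure P]
    (V : Ω → ℝ) (hVmeas : Measurable V) (hV : Integrable V P)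
    (m M : ℝ) (hsupp : SuppIoo P V m M)
    (σ : ℝ) (hσ : 0 < σ)
    (g : ℝ → ℝ) (hgmeas : Measurable g) (hgmono : Monotone g)
    (hgr : ∀ z, g z ∈ Set.Ioo m M) :
    Monotone (phip P V σ g) ∧ Monotone (phim P V σ g) ∧
    (∀ x : ℝ, phip P V σ g x ≤ ∫ z, Psip P V (g z) * gq σ (x - z)) ∧
    (∀ x : ℝ, phim P V σ g x ≥ ∫ z, Psim P V (g z) * gq σ (x - z)) := by
  have hPip (z : ℝ) : 0 < Pip P V (g z) := hsupp.Pip_pos (hgr z).2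
  have hPim (z : ℝ) : 0 < Pim P V (g z) := hsupp.Pim_pos (hgr z).1
  obtain ⟨hphip, hphim, hle, hge⟩ := stmt2_general P V hV σ hσ g hgmono hPip hPim
  exact ⟨hphip, hphim, fun x => hle x (integrable_Psip_mul_gq_sub hV hsupp.2.1 hσ hgmono hPip x),
    fun x => hge x (integrable_Psim_mul_gq_sub hV hsupp.2.1 hσ hgmono hPim x)⟩
end

section
/- For every x ∈ ℝ one has the identity g(x) = F(x) + N(N−1)·∫₀¹ (F(x) − F(x·y))·y^{N−1} dy. -/
/-!
With `A(u) = (1/u) ∫₀ᵘ g`, the function `F = (g + (N-1) A)/N` comes from a product rule: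
`N u^(N-1) F(u)` is the derivative of `u^(N-1) ∫₀ᵘ g` at almost every `u`. That function is
absolutely continuous as soon as `g` is integrable, so integrating over `[0, x]` and rescaling to
`[0, 1]` gives `N ∫₀¹ F(xy) y^(N-1) dy = A(x)` for `x ≠ 0`, and hence
`N (N-1) ∫₀¹ (F(x) - F(xy)) y^(N-1) dy = (N-1) (F(x) - A(x)) = g(x) - F(x)`.
-/

open MeasureTheory Filter Set

lemma gq_eq_gaussianPDFReal {σ : ℝ} (hσ : 0 ≤ σ) :
    gq σ = ProbabilityTheory.gaussianPDFReal 0 (σ ^ 2).toNNReal := by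
  funext z
  simp only [gq, ProbabilityTheory.gaussianPDFReal, Real.coe_toNNReal _ (sq_nonneg σ), sub_zero]
  rw [Real.sqrt_mul (x := 2 * Real.pi) (by positivity), Real.sqrt_sq hσ, div_eq_inv_mul, mul_comm σ]

lemma integrable_gq {σ : ℝ} (hσ : 0 ≤ σ) : Integrable (gq σ) :=
  gq_eq_gaussianPDFReal hσ ▸ ProbabilityTheory.integrable_gaussianPDFReal _ _

lemma integrable_integral_bdd_smul {X Z E : Type*} [MeasurableSpace X] [MeasurableSpace Z]
    [NormedAddCommGroup E] [NormedSpace ℝ E] {μ : Measure X} [IsFiniteMeasure μ]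
    {ν : Measure Z} [SFinite ν] {K : X × Z → ℝ} {q : Z → E} {C : ℝ}
    (hK : AEStronglyMeasurable K (μ.prod ν)) (hC : ∀ᵐ p ∂μ.prod ν, ‖K p‖ ≤ C)
    (hq : Integrable q ν) :
    Integrable (fun x ↦ ∫ z, K (x, z) • q z ∂ν) μ :=
  ((hq.comp_snd μ).bdd_smul C hK hC).integral_prod_left

lemma intervalIntegrable_integral_mul_gq {σ : ℝ} (hσ : 0 ≤ σ) {h : ℝ → ℝ} (hmeas : Measurable h)
    (hbdd : ∃ C, ∀ x, |h x| ≤ C) (a b : ℝ) :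
    IntervalIntegrable (fun x ↦ ∫ z, h (x + z) * gq σ z) volume a b := by
  obtain ⟨C, hC⟩ := hbdd
  rw [intervalIntegrable_iff, uIoc]
  exact integrable_integral_bdd_smul (K := fun p ↦ h (p.1 + p.2))
    (hmeas.comp measurable_add).aestronglyMeasurable (.of_forall fun _ ↦ hC _) (integrable_gq hσ)

section RunningAverage

variable {g : ℝ → ℝ} {x : ℝ}

lemma absolutelyContinuousOnInterval_pow_mul_integral (hg : IntervalIntegrable g volume 0 x)
    (n : ℕ) : AbsolutelyContinuousOnInterval (fun u ↦ u ^ n * ∫ t in 0..u, g t) 0 x :=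
  (contDiff_id.pow n).contDiffOn.absolutelyContinuousOnInterval.fun_mul
    (hg.absolutelyContinuousOnInterval_intervalIntegral left_mem_uIcc)

lemma ae_deriv_pow_mul_integral (hg : IntervalIntegrable g volume 0 x) (n : ℕ) :
    ∀ᵐ u, u ∈ uIcc 0 x → deriv (fun u ↦ u ^ n * ∫ t in 0..u, g t) u =
      u ^ n * (g u + n * ⨍ t in 0..u, g t) := by
  filter_upwards [hg.ae_hasDerivAt_integral, Measure.ae_ne volume 0] with u hu hu0 hux
  have product_rule := (hasDerivAt_pow n u).fun_mul (hu hux 0 left_mem_uIcc)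
  have pow_pred : (n : ℝ) * u ^ (n - 1) = u ^ n * n / u := by
    cases n
    · simp
    · rw [Nat.add_sub_cancel, pow_succ]
      field_simp
  rw [product_rule.deriv, pow_pred, interval_average_eq_div, sub_zero]
  ring

lemma intervalIntegrable_pow_mul_add_average (hg : IntervalIntegrable g volume 0 x) (n : ℕ) :
    IntervalIntegrable (fun u ↦ u ^ n * (g u + n * ⨍ t in 0..u, g t)) volume 0 x := by
  refine (absolutelyContinuousOnInterval_pow_mul_integral hg n).intervalIntegrable_deriv.congr_ae ?_
  rw [Filter.EventuallyEq, ae_restrict_iff' measurableSet_uIoc]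
  filter_upwards [ae_deriv_pow_mul_integral hg n] with u hu hux
  exact hu (uIoc_subset_uIcc hux)

lemma integral_pow_mul_add_average (hg : IntervalIntegrable g volume 0 x) (n : ℕ) :
    ∫ u in 0..x, u ^ n * (g u + n * ⨍ t in 0..u, g t) = x ^ (n + 1) * ⨍ t in 0..x, g t :=
  calc ∫ u in 0..x, u ^ n * (g u + n * ⨍ t in 0..u, g t)
    _ = ∫ u in 0..x, deriv (fun u ↦ u ^ n * ∫ t in 0..u, g t) u := by
      refine intervalIntegral.integral_congr_ae ?_
      filter_upwards [ae_deriv_pow_mul_integral hg n] with u hu hux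
      exact (hu (uIoc_subset_uIcc hux)).symm
    _ = x ^ n * ∫ t in 0..x, g t := by
      rw [(absolutelyContinuousOnInterval_pow_mul_integral hg n).integral_deriv_eq_sub]
      simp
    _ = x ^ (n + 1) * ⨍ t in 0..x, g t := by
      rcases eq_or_ne x 0 with rfl | hx
      · simp
      · rw [interval_average_eq_div, sub_zero]
        field_simp
        ring

lemma intervalIntegrable_add_average_comp_mul_mul_pow (hx : x ≠ 0)
    (hg : IntervalIntegrable g volume 0 x) (n : ℕ) :
    IntervalIntegrable (fun y ↦ (g (x * y) + n * ⨍ t in 0..x * y, g t) * y ^ n) volume 0 1 := by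
  have rescaled := (intervalIntegrable_pow_mul_add_average hg n).comp_mul_left (c := x)
  rw [zero_div, div_self hx] at rescaled
  convert! rescaled.const_mul (x ^ n)⁻¹ using 2 with y
  rw [mul_pow]
  field_simp

lemma integral_add_average_comp_mul_mul_pow (hx : x ≠ 0) (hg : IntervalIntegrable g volume 0 x)
    (n : ℕ) :
    ∫ y in 0..1, (g (x * y) + n * ⨍ t in 0..x * y, g t) * y ^ n = ⨍ t in 0..x, g t := by
  set S : ℝ → ℝ := fun u ↦ g u + n * ⨍ t in 0..u, g t
  refine mul_left_cancel₀ (pow_ne_zero (n + 1) hx) ?_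
  calc x ^ (n + 1) * ∫ y in 0..1, S (x * y) * y ^ n
    _ = x * ∫ y in 0..1, (x * y) ^ n * S (x * y) := by
      rw [pow_succ', mul_assoc, ← intervalIntegral.integral_const_mul]
      congr 2
      funext y
      ring
    _ = ∫ u in 0..x, u ^ n * S u := by
      simp [intervalIntegral.mul_integral_comp_mul_left (f := fun u ↦ u ^ n * S u)]
    _ = x ^ (n + 1) * ⨍ t in 0..x, g t := integral_pow_mul_add_average hg n

lemma integral_sub_comp_mul_mul_pow (hx : x ≠ 0) (hg : IntervalIntegrable g volume 0 x)
    {n : ℕ} {F : ℝ → ℝ} (hF : ∀ u ≠ 0, F u = (g u + n * ⨍ t in 0..u, g t) / (n + 1)) :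
    ∫ y in 0..1, (F x - F (x * y)) * y ^ n = (F x - ⨍ t in 0..x, g t) / (n + 1) :=
  calc ∫ y in 0..1, (F x - F (x * y)) * y ^ n
    _ = ∫ y in 0..1, (F x * y ^ n
          - (g (x * y) + n * ⨍ t in 0..x * y, g t) * y ^ n / (n + 1)) := by
      refine intervalIntegral.integral_congr_ae ?_
      filter_upwards [Measure.ae_ne volume 0] with y hy _
      rw [hF (x * y) (mul_ne_zero hx hy)]
      ring
    _ = (F x - ⨍ t in 0..x, g t) / (n + 1) := by
      rw [intervalIntegral.integral_sub ((intervalIntegral.intervalIntegrable_pow n).const_mul _)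
        ((intervalIntegrable_add_average_comp_mul_mul_pow hx hg n).div_const _),
        intervalIntegral.integral_const_mul, intervalIntegral.integral_div,
        integral_add_average_comp_mul_mul_pow hx hg, integral_pow, one_pow,
        zero_pow n.succ_ne_zero]
      ring

end RunningAverage

theorem stmt3_general {N : ℕ} (hN : 1 ≤ N) {g F : ℝ → ℝ}
    (hg : ∀ x, IntervalIntegrable g volume 0 x)
    (hF0 : F 0 = g 0)
    (hF : ∀ x : ℝ, x ≠ 0 → F x = g x / N + (((N:ℝ) - 1) / (N * x)) * ∫ u in (0:ℝ)..x, g u) :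
    ∀ x : ℝ, g x = F x + N * ((N:ℝ) - 1) * ∫ y in (0:ℝ)..1, (F x - F (x * y)) * y ^ (N - 1) := by
  intro x
  rcases eq_or_ne x 0 with rfl | hx
  · simp [hF0]
  obtain ⟨n, rfl⟩ := Nat.exists_eq_add_of_le' hN
  have F_eq (u : ℝ) (hu : u ≠ 0) : F u = (g u + n * ⨍ t in 0..u, g t) / (n + 1) := by
    rw [hF u hu, interval_average_eq_div]
    push_cast
    field_simp
    ring
  rw [Nat.add_sub_cancel, integral_sub_comp_mul_mul_pow hx (hg x) F_eq, F_eq x hx]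
  push_cast
  field_simp
  ring

/-- With `g(x) = ∫ h(x+z) q(σ,z) dz` and
`F(x) = g(x)/N + ((N−1)/(Nx))∫₀ˣ g(u) du` (`F(0) = g(0)`), for every `x` one has
`g(x) = F(x) + N(N−1)·∫₀¹ (F(x) − F(x·y))·y^{N−1} dy`. -/
theorem stmt3 (σ : ℝ) (hσ : 0 < σ) (N : ℕ) (hN : 1 ≤ N)
    (h : ℝ → ℝ) (hmeas : Measurable h) (hmono : Monotone h) (hbdd : ∃ C, ∀ x, |h x| ≤ C)
    (g F : ℝ → ℝ)
    (hg : ∀ x, g x = ∫ z, h (x + z) * gq σ z)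
    (hF0 : F 0 = g 0)
    (hF : ∀ x : ℝ, x ≠ 0 → F x = g x / N + (((N:ℝ) - 1) / (N * x)) * ∫ u in (0:ℝ)..x, g u) :
    ∀ x : ℝ, g x = F x + N * ((N:ℝ) - 1) * ∫ y in (0:ℝ)..1, (F x - F (x * y)) * y ^ (N - 1) := by
  refine stmt3_general hN (fun x ↦ ?_) hF0 hF
  exact funext hg ▸ intervalIntegrable_integral_mul_gq hσ.le hmeas hbdd 0 x
end
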